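/- arXiv:2501.06840 — 2 statements merged into one kernel-verified Lean document; each statement's English description precedes it below -/
import Mathlib

section
/- Let n ≥ 1 and m ≥ 1 be integers. Let G be a closed connected subgroup of GL(n), let V be a complex linear subspace of the space T⁺(n) of strictly upper-triangular n×n complex matrices, and let L be a nonempty subset of ℂⁿ such that: (i) L ∖ Δ_L is dense in L, and (ii) for every connected component C of L ∖ Δ_L, the group {σ ∈ G ∩ Sₙ : σ·C = C} acts transitively on {1,…,n}. Then there exists a continuous spectrum-shrinking map φ : Ad_G T_{L,V} → M_m if and only if n divides m; and in that case every such φ satisfies the equality of characteristic polynomials k_{φ(X)} = (k_X)^{m/n} for all X ∈ Ad_G T_{L,V}. -/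
open Matrix

/-!
If `X = g (diag(x) + v) g⁻¹` with `x` free of repetitions, then `k_{φ(X)} = ∏ᵢ (t - xᵢ) ^ fᵢ`, and
the exponent vector `f` takes finitely many values, each on a closed set of parameters `(g, x, v)`.
So `f` is constant while `g`, `v` and `x` range over connected sets. For a permutation matrix
`σ ∈ G` the parameters `(σ, x, 0)` and `(1, x ∘ σ, 0)` give the same matrix, which forces
`f_{σ i} = f_i`; transitivity makes `f` a constant `k`, and comparing degrees gives `m = n k`. The
resulting identity `k_{φ(X)} = k_X ^ k` is a closed condition on `X`, so it extends by density to
repeated eigenvalues.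
-/

section Polynomial

open Polynomial

theorem rootMultiplicity_prod_X_sub_C_pow {R ι : Type*} [CommRing R] [IsDomain R] [Fintype ι]
    {l : ι → R} (hl : Function.Injective l) (f : ι → ℕ) (j : ι) :
    (∏ i, (X - C (l i)) ^ f i).rootMultiplicity (l j) = f j := by
  classical
  rw [← count_roots, roots_prod _ _ (Finset.prod_ne_zero_iff.2 fun i _ =>
    pow_ne_zero _ (X_sub_C_ne_zero _))]
  simp [roots_pow, Multiset.count_bind, Multiset.count_singleton, hl.eq_iff]

theorem eq_prod_X_sub_C_pow_rootMultiplicity {R ι : Type*} [CommRing R] [IsDomain R] [Fintype ι]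
    {p : R[X]} (hp : p.Monic) (hsplits : p.Splits) {l : ι → R} (hl : Function.Injective l)
    (hroots : ∀ z, p.IsRoot z → z ∈ Set.range l) :
    p = ∏ i, (X - C (l i)) ^ p.rootMultiplicity (l i) := by
  classical
  have hsub : p.roots.toFinset ⊆ Finset.univ.image l := fun z hz => by
    simpa using hroots z (isRoot_of_mem_roots (Multiset.mem_toFinset.1 hz))
  calc p = ∏ z ∈ p.roots.toFinset, (X - C z) ^ p.rootMultiplicity z := by
        rw [← prod_multiset_root_eq_finset_root, ← hsplits.eq_prod_roots_of_monic hp]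
    _ = ∏ z ∈ Finset.univ.image l, (X - C z) ^ p.rootMultiplicity z :=
        Finset.prod_subset hsub fun z _ hz => by
          rw [← count_roots, Multiset.count_eq_zero_of_notMem (mt Multiset.mem_toFinset.2 hz),
            pow_zero]
    _ = ∏ i, (X - C (l i)) ^ p.rootMultiplicity (l i) :=
        Finset.prod_image hl.injOn

theorem isClosed_setOf_eq_of_continuous_eval {T R : Type*} [TopologicalSpace T] [CommRing R]
    [IsDomain R] [Infinite R] [TopologicalSpace R] [T2Space R] {p q : T → R[X]}
    (hp : ∀ z, Continuous fun t => (p t).eval z) (hq : ∀ z, Continuous fun t => (q t).eval z) :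
    IsClosed {t | p t = q t} := by
  have : {t | p t = q t} = ⋂ z, {t | (p t).eval z = (q t).eval z} := by
    ext t
    simp only [Set.mem_ofPred_eq, Set.mem_iInter]
    exact ⟨fun h z => h ▸ rfl, Polynomial.funext⟩
  rw [this]
  exact isClosed_iInter fun z => isClosed_eq (hp z) (hq z)

end Polynomial

theorem isLocallyConstant_of_finite_range_of_isClosed_fiber {T Y : Type*} [TopologicalSpace T]
    {f : T → Y} (hfin : (Set.range f).Finite) (hclosed : ∀ y, IsClosed (f ⁻¹' {y})) :
    IsLocallyConstant f := by
  intro s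
  have : f ⁻¹' s = (⋃ y ∈ Set.range f \ s, f ⁻¹' {y})ᶜ := by
    ext t
    simp only [Set.mem_preimage, Set.mem_compl_iff, Set.mem_iUnion, Set.mem_singleton_iff,
      exists_prop, exists_eq_right', Set.mem_sdiff, Set.mem_range_self, true_and, not_not]
  rw [this, isOpen_compl_iff]
  exact (hfin.subset Set.sdiff_subset).isClosed_biUnion fun y _ => hclosed y

section Charpoly

open Polynomial

variable {ι κ T : Type*} [Fintype κ] [DecidableEq κ]

theorem continuous_eval_charpoly {R : Type*} [CommRing R] [TopologicalSpace R]
    [IsTopologicalRing R] [TopologicalSpace T] {A : T → Matrix κ κ R} (hA : Continuous A) (z : R) :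
    Continuous fun t => (A t).charpoly.eval z := by
  simp only [eval_charpoly]
  exact (continuous_const.sub hA).matrix_det

theorem card_eq_card_mul_of_charpoly_eq_pow [Fintype ι] [DecidableEq ι] {R : Type*} [CommRing R]
    [Nontrivial R] {A : Matrix κ κ R} {B : Matrix ι ι R} {k : ℕ} (h : A.charpoly = B.charpoly ^ k) :
    Fintype.card κ = Fintype.card ι * k := by
  rw [← A.charpoly_natDegree_eq_dim, h, B.charpoly_monic.natDegree_pow,
    B.charpoly_natDegree_eq_dim, mul_comm]

variable {𝕜 : Type*} [Field 𝕜] [IsAlgClosed 𝕜]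

theorem charpoly_eq_prod_X_sub_C_pow_rootMultiplicity [Fintype ι] {A : Matrix κ κ 𝕜} {l : ι → 𝕜}
    (hl : Function.Injective l) (hA : spectrum 𝕜 A ⊆ Set.range l) :
    A.charpoly = ∏ i, (X - C (l i)) ^ A.charpoly.rootMultiplicity (l i) :=
  eq_prod_X_sub_C_pow_rootMultiplicity A.charpoly_monic (IsAlgClosed.splits _) hl
    fun _ hz => hA (mem_spectrum_iff_isRoot_charpoly.2 hz)

variable [TopologicalSpace 𝕜] [IsTopologicalRing 𝕜] [T2Space 𝕜] [TopologicalSpace T]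

theorem isLocallyConstant_rootMultiplicity_charpoly [Finite ι] {l : T → ι → 𝕜}
    (hl : Continuous l) (hinj : ∀ t, Function.Injective (l t)) {A : T → Matrix κ κ 𝕜}
    (hA : Continuous A) (hspec : ∀ t, spectrum 𝕜 (A t) ⊆ Set.range (l t)) :
    IsLocallyConstant fun t i => (A t).charpoly.rootMultiplicity (l t i) := by
  have := Fintype.ofFinite ι
  refine isLocallyConstant_of_finite_range_of_isClosed_fiber ?_ fun f => ?_
  · refine (Set.Finite.pi' fun _ : ι => Set.finite_Iic (Fintype.card κ)).subset ?_
    rintro _ ⟨t, rfl⟩ i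
    calc (A t).charpoly.rootMultiplicity (l t i)
        ≤ Multiset.card (A t).charpoly.roots := by
          classical
          exact (count_roots (A t).charpoly).ge.trans (Multiset.count_le_card _ _)
      _ ≤ (A t).charpoly.natDegree := card_roots' _
      _ = Fintype.card κ := (A t).charpoly_natDegree_eq_dim
  · have hfiber : (fun t i => (A t).charpoly.rootMultiplicity (l t i)) ⁻¹' {f} =
        {t | (A t).charpoly = ∏ i, (X - C (l t i)) ^ f i} := by
      ext t
      refine ⟨?_, fun h => ?_⟩
      · rintro rfl
        exact charpoly_eq_prod_X_sub_C_pow_rootMultiplicity (hinj t) (hspec t)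
      · ext i
        exact (congrArg _ h).trans (rootMultiplicity_prod_X_sub_C_pow (hinj t) f i)
    rw [hfiber]
    refine isClosed_setOf_eq_of_continuous_eval (continuous_eval_charpoly hA) fun z => ?_
    simp only [eval_prod, eval_pow, eval_sub, eval_X, eval_C]
    fun_prop

end Charpoly

section SpectrumShrinking

variable {ι κ R : Type*} [Fintype ι] [Fintype κ] [DecidableEq ι] [DecidableEq κ] [CommRing R]

/-- A map from a set `S` of square matrices to matrices of a possibly different size is
spectrum-shrinking if it never creates new eigenvalues. -/
def IsSpectrumShrinking {S : Set (Matrix ι ι R)} (φ : S → Matrix κ κ R) : Prop :=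
  ∀ X : S, spectrum R (φ X) ⊆ spectrum R (X : Matrix ι ι R)

theorem charpoly_eq_charpoly_pow_of_subset_closure [TopologicalSpace R] [IsTopologicalRing R]
    [T2Space R] [IsDomain R] [Infinite R] {S S' : Set (Matrix ι ι R)} (hS' : S' ⊆ S)
    (hdense : S ⊆ closure S') {φ : S → Matrix κ κ R} (hφ : Continuous φ) (k : ℕ)
    (h : ∀ Y (hY : Y ∈ S'), (φ ⟨Y, hS' hY⟩).charpoly = Y.charpoly ^ k) (Y : S) :
    (φ Y).charpoly = (Y : Matrix ι ι R).charpoly ^ k := by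
  have hclosed : IsClosed {Y : S | (φ Y).charpoly = (Y : Matrix ι ι R).charpoly ^ k} := by
    refine isClosed_setOf_eq_of_continuous_eval (continuous_eval_charpoly hφ) fun z => ?_
    simp only [Polynomial.eval_pow]
    exact (continuous_eval_charpoly continuous_subtype_val z).pow k
  have hY : Y ∈ closure (Subtype.val ⁻¹' S' : Set S) := by
    rw [closure_subtype, Subtype.image_preimage_coe, Set.inter_eq_right.2 hS']
    exact hdense Y.2
  have hsub : Subtype.val ⁻¹' S' ⊆ {Y : S | (φ Y).charpoly = (Y : Matrix ι ι R).charpoly ^ k} :=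
    fun Z hZ => h Z hZ
  exact closure_minimal hsub hclosed hY

theorem IsSpectrumShrinking.comp_inclusion {S S' : Set (Matrix ι ι R)} {φ : S → Matrix κ κ R}
    (hφ : IsSpectrumShrinking φ) (h : S' ⊆ S) : IsSpectrumShrinking (φ ∘ Set.inclusion h) :=
  fun Y => hφ (Set.inclusion h Y)

theorem exists_continuous_isSpectrumShrinking_of_card_dvd [TopologicalSpace R]
    (h : Fintype.card ι ∣ Fintype.card κ) (S : Set (Matrix ι ι R)) :
    ∃ φ : S → Matrix κ κ R, Continuous φ ∧ IsSpectrumShrinking φ := by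
  obtain ⟨k, hk⟩ := h
  have e : Fin k × ι ≃ κ := Fintype.equivOfCardEq (by simp [hk, mul_comm])
  let blockScalar : Matrix ι ι R →ₐ[R] Matrix κ κ R :=
    (reindexAlgEquiv R R e).toAlgHom.comp
      ((compAlgEquiv (Fin k) ι R R).toAlgHom.comp (scalarAlgHom (Fin k) R))
  have hcont : Continuous blockScalar :=
    continuous_matrix fun i j =>
      (continuous_pi fun _ => continuous_id).matrix_diagonal.matrix_elem _ _ |>.matrix_elem _ _
  exact ⟨fun X => blockScalar X, hcont.comp continuous_subtype_val,
    fun X => AlgHom.spectrum_apply_subset blockScalar (X : Matrix ι ι R)⟩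

end SpectrumShrinking

section AdTriangular

/-- The set `Ad_G T_{L,V}` of conjugates under `G` of the matrices `diag(x) + v` with `x ∈ L` and
`v ∈ V`. Here `G` and `V` are arbitrary sets of matrices, and `⁻¹` is the matrix inverse, which is
`0` on singular matrices. -/
def adTriangular {ι R : Type*} [Fintype ι] [DecidableEq ι] [CommRing R] (G : Set (Matrix ι ι R))
    (L : Set (ι → R)) (V : Set (Matrix ι ι R)) : Set (Matrix ι ι R) :=
  {Y | ∃ g ∈ G, ∃ x ∈ L, ∃ v ∈ V, Y = g * (diagonal x + v) * g⁻¹}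

/-- The parametrization `(g, x, v) ↦ g (diag(x) + v) g⁻¹` of `Ad_G T_{L,V}`. -/
noncomputable def adTriangularMk {ι R : Type*} [Fintype ι] [DecidableEq ι] [CommRing R]
    {G : Set (Matrix ι ι R)} {L : Set (ι → R)} {V : Set (Matrix ι ι R)} (t : ↥(G ×ˢ L ×ˢ V)) :
    adTriangular G L V :=
  ⟨t.1.1 * (diagonal t.1.2.1 + t.1.2.2) * t.1.1⁻¹,
    t.1.1, t.2.1, t.1.2.1, t.2.2.1, t.1.2.2, t.2.2.2, rfl⟩

theorem comp_perm_mem_of_image_eq {ι α : Type*} {σ : Equiv.Perm ι} {C : Set (ι → α)}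
    (hC : (fun (y : ι → α) k => y (σ⁻¹ k)) '' C = C) {x : ι → α} (hx : x ∈ C) : x ∘ σ ∈ C := by
  rw [← hC] at hx
  obtain ⟨y, hy, rfl⟩ := hx
  simpa [Function.comp_def] using hy

section DecidableEq

variable {ι κ R : Type*} [Fintype ι] [DecidableEq ι] [Fintype κ] [DecidableEq κ] [CommRing R]
  {G V : Set (Matrix ι ι R)} {L L' : Set (ι → R)}

theorem permMatrix_mul_diagonal_mul_inv (σ : Equiv.Perm ι) (x : ι → R) :
    σ.permMatrix R * diagonal x * (σ.permMatrix R)⁻¹ = diagonal (x ∘ σ) := by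
  have hinv : (σ.permMatrix R)⁻¹ = σ⁻¹.permMatrix R :=
    inv_eq_right_inv (by rw [← permMatrix_mul, inv_mul_cancel, permMatrix_one])
  rw [hinv, PEquiv.toMatrix_toPEquiv_mul, PEquiv.mul_toMatrix_toPEquiv, submatrix_submatrix]
  exact submatrix_diagonal_equiv x σ

theorem adTriangularMk_surjective :
    Function.Surjective (adTriangularMk : ↥(G ×ˢ L ×ˢ V) → adTriangular G L V) := by
  rintro ⟨_, g, hg, x, hx, v, hv, rfl⟩
  exact ⟨⟨(g, x, v), hg, hx, hv⟩, rfl⟩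

theorem adTriangular_mono (h : L' ⊆ L) : adTriangular G L' V ⊆ adTriangular G L V := by
  rintro _ ⟨g, hg, x, hx, v, hv, rfl⟩
  exact ⟨g, hg, x, h hx, v, hv, rfl⟩

theorem adTriangularMk_permMatrix {σ : Equiv.Perm ι} (hσ : σ.permMatrix R ∈ G)
    (h1 : (1 : Matrix ι ι R) ∈ G) (h0 : (0 : Matrix ι ι R) ∈ V) {x : ι → R} (hx : x ∈ L)
    (hxσ : x ∘ σ ∈ L) :
    adTriangularMk ⟨(σ.permMatrix R, x, 0), hσ, hx, h0⟩ =
      adTriangularMk (⟨(1, x ∘ σ, 0), h1, hxσ, h0⟩ : ↥(G ×ˢ L ×ˢ V)) := by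
  apply Subtype.ext
  simp only [adTriangularMk, add_zero, permMatrix_mul_diagonal_mul_inv, one_mul, inv_one, mul_one]

/-- The multiplicity of the `i`-th diagonal entry `xᵢ` as a root of `k_{φ(X)}`, where
`X = g (diag(x) + v) g⁻¹` and `t = (g, x, v)`. It is indexed by parameters rather than matrices
because the entries of `x` are labelled while the eigenvalues of `X` are not. -/
noncomputable def diagonalMultiplicity (φ : adTriangular G L V → Matrix κ κ R)
    (t : ↥(G ×ˢ L ×ˢ V)) (i : ι) : ℕ :=
  (φ (adTriangularMk t)).charpoly.rootMultiplicity (t.1.2.1 i)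

theorem diagonalMultiplicity_perm {φ : adTriangular G L V → Matrix κ κ R}
    (hconst : ∀ s t, diagonalMultiplicity φ s = diagonalMultiplicity φ t)
    (h1 : (1 : Matrix ι ι R) ∈ G) (h0 : (0 : Matrix ι ι R) ∈ V) {x : ι → R} (hx : x ∈ L)
    {σ : Equiv.Perm ι} (hσ : σ.permMatrix R ∈ G) (hxσ : x ∘ σ ∈ L) (t : ↥(G ×ˢ L ×ˢ V)) (i : ι) :
    diagonalMultiplicity φ t (σ i) = diagonalMultiplicity φ t i := by
  let a : ↥(G ×ˢ L ×ˢ V) := ⟨(σ.permMatrix R, x, 0), hσ, hx, h0⟩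
  let b : ↥(G ×ˢ L ×ˢ V) := ⟨(1, x ∘ σ, 0), h1, hxσ, h0⟩
  have hab : adTriangularMk a = adTriangularMk b := adTriangularMk_permMatrix hσ h1 h0 hx hxσ
  calc diagonalMultiplicity φ t (σ i)
      = diagonalMultiplicity φ a (σ i) := congrFun (hconst t a) _
    _ = diagonalMultiplicity φ b i := by rw [diagonalMultiplicity, hab, diagonalMultiplicity]; rfl
    _ = diagonalMultiplicity φ t i := congrFun (hconst b t) _

theorem adTriangular_subset_closure [TopologicalSpace R] [IsTopologicalRing R]
    (h : L ⊆ closure L') : adTriangular G L V ⊆ closure (adTriangular G L' V) := by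
  rintro _ ⟨g, hg, x, hx, v, hv, rfl⟩
  have hcont : Continuous fun y : ι → R => g * (diagonal y + v) * g⁻¹ := by fun_prop
  exact map_mem_closure (f := fun y => g * (diagonal y + v) * g⁻¹) hcont (h hx)
    fun y hy => ⟨g, hg, y, hy, v, hv, rfl⟩

end DecidableEq

theorem continuous_adTriangularMk {ι 𝕜 : Type*} [Fintype ι] [DecidableEq ι]
    [Field 𝕜] [TopologicalSpace 𝕜] [IsTopologicalDivisionRing 𝕜] {G V : Set (Matrix ι ι 𝕜)}
    {L : Set (ι → 𝕜)} (hG : ∀ g ∈ G, IsUnit g) :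
    Continuous (adTriangularMk : ↥(G ×ˢ L ×ˢ V) → adTriangular G L V) := by
  have hinv : Continuous fun t : ↥(G ×ˢ L ×ˢ V) => t.1.1⁻¹ := by
    refine continuous_iff_continuousAt.2 fun t => ?_
    have hdet : t.1.1.det ≠ 0 := ((isUnit_iff_isUnit_det _).1 (hG _ t.2.1)).ne_zero
    have hinvAt : ContinuousAt Inv.inv t.1.1 :=
      continuousAt_matrix_inv _ (by simpa only [Ring.inverse_eq_inv'] using continuousAt_inv₀ hdet)
    exact hinvAt.comp (f := fun t : ↥(G ×ˢ L ×ˢ V) => t.1.1) (by fun_prop)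
  refine Continuous.subtype_mk ?_ _
  fun_prop

open Polynomial in
theorem charpoly_conj_diagonal_add {ι R : Type*} [Fintype ι] [LinearOrder ι] [CommRing R]
    {g v : Matrix ι ι R} (hg : IsUnit g) (hv : ∀ i j, j ≤ i → v i j = 0) (x : ι → R) :
    (g * (diagonal x + v) * g⁻¹).charpoly = ∏ i, (X - C (x i)) := by
  obtain ⟨u, rfl⟩ := hg
  have htri : (diagonal x + v).IsUpperTriangular := fun i j (hij : j < i) => by
    simp [hv i j hij.le, hij.ne']
  rw [charpoly_units_conj, charpoly_of_isUpperTriangular _ htri]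
  simp [hv _ _ le_rfl]

section LinearOrder

variable {ι κ 𝕜 : Type*} [Fintype ι] [LinearOrder ι] [Fintype κ] [DecidableEq κ] [Field 𝕜]
  {G V : Set (Matrix ι ι 𝕜)} {L L' : Set (ι → 𝕜)}

theorem spectrum_conj_diagonal_add {g v : Matrix ι ι 𝕜} (hg : IsUnit g)
    (hv : ∀ i j, j ≤ i → v i j = 0) (x : ι → 𝕜) :
    spectrum 𝕜 (g * (diagonal x + v) * g⁻¹) = Set.range x := by
  ext z
  simp [mem_spectrum_iff_isRoot_charpoly, charpoly_conj_diagonal_add hg hv, Polynomial.IsRoot,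
    Polynomial.eval_prod, Finset.prod_eq_zero_iff, sub_eq_zero, eq_comm (a := z)]

theorem IsSpectrumShrinking.spectrum_adTriangularMk_subset_range (hGunit : ∀ g ∈ G, IsUnit g)
    (hVtri : ∀ v ∈ V, ∀ i j, j ≤ i → v i j = 0) {φ : adTriangular G L V → Matrix κ κ 𝕜}
    (hshrink : IsSpectrumShrinking φ) (t : ↥(G ×ˢ L ×ˢ V)) :
    spectrum 𝕜 (φ (adTriangularMk t)) ⊆ Set.range t.1.2.1 :=
  (hshrink _).trans_eq (spectrum_conj_diagonal_add (hGunit _ t.2.1) (hVtri _ t.2.2.2) t.1.2.1)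

variable [IsAlgClosed 𝕜]

theorem charpoly_eq_charpoly_pow_of_diagonalMultiplicity_eq (hGunit : ∀ g ∈ G, IsUnit g)
    (hVtri : ∀ v ∈ V, ∀ i j, j ≤ i → v i j = 0) {φ : adTriangular G L V → Matrix κ κ 𝕜}
    (hshrink : IsSpectrumShrinking φ) {k : ℕ} {t : ↥(G ×ˢ L ×ˢ V)}
    (hinj : Function.Injective t.1.2.1) (hk : ∀ i, diagonalMultiplicity φ t i = k) :
    (φ (adTriangularMk t)).charpoly = (adTriangularMk t : Matrix ι ι 𝕜).charpoly ^ k := by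
  rw [charpoly_eq_prod_X_sub_C_pow_rootMultiplicity hinj
      (hshrink.spectrum_adTriangularMk_subset_range hGunit hVtri t),
    adTriangularMk, charpoly_conj_diagonal_add (hGunit _ t.2.1) (hVtri _ t.2.2.2),
    ← Finset.prod_pow]
  exact Finset.prod_congr rfl fun i _ => congrArg _ (hk i)

variable [TopologicalSpace 𝕜] [IsTopologicalDivisionRing 𝕜] [T2Space 𝕜]

theorem diagonalMultiplicity_eq_of_isPreconnected (hGunit : ∀ g ∈ G, IsUnit g)
    (hG : IsPreconnected G) (hV : IsPreconnected V) (hVtri : ∀ v ∈ V, ∀ i j, j ≤ i → v i j = 0)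
    (hL : IsPreconnected L) (hinj : ∀ x ∈ L, Function.Injective x)
    {φ : adTriangular G L V → Matrix κ κ 𝕜} (hφ : Continuous φ) (hshrink : IsSpectrumShrinking φ)
    (s t : ↥(G ×ˢ L ×ˢ V)) : diagonalMultiplicity φ s = diagonalMultiplicity φ t := by
  have := Subtype.preconnectedSpace (hG.prod (hL.prod hV))
  exact (isLocallyConstant_rootMultiplicity_charpoly (by fun_prop)
    (fun t : ↥(G ×ˢ L ×ˢ V) => hinj t.1.2.1 t.2.2.1)
    (hφ.comp (continuous_adTriangularMk hGunit))
    (hshrink.spectrum_adTriangularMk_subset_range hGunit hVtri)).apply_eq_of_preconnectedSpace s t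

theorem card_dvd_and_charpoly_eq_pow_of_isPreconnected [Nonempty ι] (hGunit : ∀ g ∈ G, IsUnit g)
    (h1 : (1 : Matrix ι ι 𝕜) ∈ G) (hG : IsPreconnected G) (h0 : (0 : Matrix ι ι 𝕜) ∈ V)
    (hV : IsPreconnected V) (hVtri : ∀ v ∈ V, ∀ i j, j ≤ i → v i j = 0)
    (hL : IsPreconnected L) (hinj : ∀ x ∈ L, Function.Injective x) {x : ι → 𝕜} (hx : x ∈ L)
    (htrans : ∀ i j, ∃ σ : Equiv.Perm ι, σ.permMatrix 𝕜 ∈ G ∧ x ∘ σ ∈ L ∧ σ i = j)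
    {φ : adTriangular G L V → Matrix κ κ 𝕜} (hφ : Continuous φ) (hshrink : IsSpectrumShrinking φ) :
    Fintype.card ι ∣ Fintype.card κ ∧ ∀ Y, (φ Y).charpoly =
      (Y : Matrix ι ι 𝕜).charpoly ^ (Fintype.card κ / Fintype.card ι) := by
  obtain ⟨i₀⟩ := ‹Nonempty ι›
  let t₀ : ↥(G ×ˢ L ×ˢ V) := ⟨(1, x, 0), h1, hx, h0⟩
  have hconst :=
    diagonalMultiplicity_eq_of_isPreconnected hGunit hG hV hVtri hL hinj hφ hshrink
  have hmult (t : ↥(G ×ˢ L ×ˢ V)) (i : ι) :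
      diagonalMultiplicity φ t i = diagonalMultiplicity φ t₀ i₀ := by
    obtain ⟨σ, hσ, hxσ, rfl⟩ := htrans i₀ i
    rw [diagonalMultiplicity_perm hconst h1 h0 hx hσ hxσ, hconst t t₀]
  have hpow (t : ↥(G ×ˢ L ×ˢ V)) :=
    charpoly_eq_charpoly_pow_of_diagonalMultiplicity_eq hGunit hVtri hshrink (hinj _ t.2.2.1)
      (hmult t)
  have hcard := card_eq_card_mul_of_charpoly_eq_pow (hpow t₀)
  refine ⟨⟨_, hcard⟩, fun Y => ?_⟩
  obtain ⟨t, rfl⟩ := adTriangularMk_surjective Y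
  rw [hpow t, hcard, Nat.mul_div_cancel_left _ Fintype.card_pos]

theorem spectrum_shrinker_of_adjoint_orbit_triangular_general [Nonempty ι]
    (hGunit : ∀ g ∈ G, IsUnit g) (h1 : (1 : Matrix ι ι 𝕜) ∈ G) (hG : IsPreconnected G)
    (h0 : (0 : Matrix ι ι 𝕜) ∈ V) (hV : IsPreconnected V)
    (hVtri : ∀ v ∈ V, ∀ i j, j ≤ i → v i j = 0)
    (hLne : L.Nonempty) (hL' : L' ⊆ L) (hinj : ∀ x ∈ L', Function.Injective x)
    (hdense : L ⊆ closure L')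
    (htrans : ∀ x ∈ L', ∀ i j, ∃ σ : Equiv.Perm ι,
      σ.permMatrix 𝕜 ∈ G ∧ x ∘ σ ∈ connectedComponentIn L' x ∧ σ i = j) :
    ((∃ φ : adTriangular G L V → Matrix κ κ 𝕜, Continuous φ ∧ IsSpectrumShrinking φ) ↔
      Fintype.card ι ∣ Fintype.card κ) ∧
    ∀ φ : adTriangular G L V → Matrix κ κ 𝕜, Continuous φ → IsSpectrumShrinking φ →
      ∀ Y, (φ Y).charpoly =
        (Y : Matrix ι ι 𝕜).charpoly ^ (Fintype.card κ / Fintype.card ι) := by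
  have hsub (x : ι → 𝕜) : connectedComponentIn L' x ⊆ L :=
    (connectedComponentIn_subset L' x).trans hL'
  have hcomponent {φ : adTriangular G L V → Matrix κ κ 𝕜} (hφ : Continuous φ)
      (hshrink : IsSpectrumShrinking φ) {x : ι → 𝕜} (hx : x ∈ L') :=
    card_dvd_and_charpoly_eq_pow_of_isPreconnected hGunit h1 hG h0 hV hVtri
      isPreconnected_connectedComponentIn
      (fun y hy => hinj y (connectedComponentIn_subset L' x hy))
      (mem_connectedComponentIn hx) (htrans x hx)
      (hφ.comp (continuous_inclusion (adTriangular_mono (hsub x))))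
      (hshrink.comp_inclusion (adTriangular_mono (hsub x)))
  refine ⟨⟨?_, fun h => exists_continuous_isSpectrumShrinking_of_card_dvd h _⟩, ?_⟩
  · rintro ⟨φ, hφ, hshrink⟩
    obtain ⟨x, hx⟩ := closure_nonempty_iff.1 (hLne.mono hdense)
    exact (hcomponent hφ hshrink hx).1
  · intro φ hφ hshrink
    refine charpoly_eq_charpoly_pow_of_subset_closure (adTriangular_mono hL')
      (adTriangular_subset_closure hdense) hφ _ ?_
    rintro _ ⟨g, hg, x, hx, v, hv, rfl⟩
    exact (hcomponent hφ hshrink hx).2 ⟨_, g, hg, x, mem_connectedComponentIn hx, v, hv, rfl⟩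

end LinearOrder

end AdTriangular

/-- Let `G ≤ GL(n)` be a closed connected subgroup, `V` a linear subspace of
the strictly upper-triangular matrices, and `L ⊆ ℂⁿ` a nonempty subset such that `L ∖ Δ_L`
is dense in `L` and the isotropy group in `G ∩ Sₙ` of each connected component of `L ∖ Δ_L`
acts transitively on `{1,…,n}`.  Then a continuous spectrum-shrinking map
`φ : Ad_G T_{L,V} → M_m` exists iff `n ∣ m`, and in that case every such `φ` satisfies
`k_{φ(X)} = (k_X)^(m/n)`. -/
theorem spectrum_shrinker_of_adjoint_orbit_triangular
    (n m : ℕ) (hn : 1 ≤ n) (hm : 1 ≤ m)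
    -- `G`: a closed connected subgroup of `GL(n)`
    (G : Set (Matrix (Fin n) (Fin n) ℂ))
    (hGunit : ∀ g ∈ G, IsUnit g)
    (hGone : (1 : Matrix (Fin n) (Fin n) ℂ) ∈ G)
    (hGmul : ∀ g ∈ G, ∀ h ∈ G, g * h ∈ G)
    (hGinv : ∀ g ∈ G, g⁻¹ ∈ G)
    (hGclosed : IsClosed (Subtype.val ⁻¹' G :
      Set {X : Matrix (Fin n) (Fin n) ℂ // IsUnit X}))
    (hGconn : IsConnected G)
    -- `V`: a subspace of the strictly upper-triangular matrices
    (V : Submodule ℂ (Matrix (Fin n) (Fin n) ℂ))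
    (hV : ∀ v ∈ V, ∀ i j : Fin n, j ≤ i → v i j = 0)
    -- `L ⊆ ℂⁿ` nonempty, with `L'` denoting `L ∖ Δ_L`
    (L : Set (Fin n → ℂ)) (hLne : L.Nonempty)
    (L' : Set (Fin n → ℂ))
    (hL' : L' = L \ {x ∈ L | ∃ j k : Fin n, j ≠ k ∧ x j = x k})
    -- (i) `L ∖ Δ_L` is dense in `L`
    (hdense : L ⊆ closure L')
    -- (ii) the isotropy group in `G ∩ Sₙ` of each connected component of `L ∖ Δ_L`
    -- acts transitively on `{1,…,n}`
    (htrans : ∀ x ∈ L', ∀ i j : Fin n, ∃ σ : Equiv.Perm (Fin n),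
        σ.permMatrix ℂ ∈ G ∧
        (fun y : Fin n → ℂ => fun k => y (σ⁻¹ k)) '' connectedComponentIn L' x
          = connectedComponentIn L' x ∧
        σ i = j)
    -- the domain `Ad_G T_{L,V}`
    (D : Set (Matrix (Fin n) (Fin n) ℂ))
    (hD : D = {Y | ∃ g ∈ G, ∃ lam ∈ L, ∃ v ∈ V,
        Y = g * (Matrix.diagonal lam + v) * g⁻¹}) :
    ((∃ φ : {Y : Matrix (Fin n) (Fin n) ℂ // Y ∈ D} → Matrix (Fin m) (Fin m) ℂ,
        Continuous φ ∧ ∀ X, spectrum ℂ (φ X) ⊆ spectrum ℂ X.val) ↔ n ∣ m) ∧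
    (n ∣ m → ∀ φ : {Y : Matrix (Fin n) (Fin n) ℂ // Y ∈ D} → Matrix (Fin m) (Fin m) ℂ,
        Continuous φ → (∀ X, spectrum ℂ (φ X) ⊆ spectrum ℂ X.val) →
        ∀ X, (φ X).charpoly = X.val.charpoly ^ (m / n)) := by
  subst hD
  have : Nonempty (Fin n) := ⟨⟨0, hn⟩⟩
  have hinj : ∀ x ∈ L', Function.Injective x := fun x hx i j hij =>
    by_contra fun hne => (hL' ▸ hx).2 ⟨(hL' ▸ hx).1, i, j, hne, hij⟩
  have horbit : ∀ x ∈ L', ∀ i j, ∃ σ : Equiv.Perm (Fin n),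
      σ.permMatrix ℂ ∈ G ∧ x ∘ σ ∈ connectedComponentIn L' x ∧ σ i = j := fun x hx i j =>
    (htrans x hx i j).imp fun σ ⟨hσG, hσC, hσ⟩ =>
      ⟨hσG, comp_perm_mem_of_image_eq hσC (mem_connectedComponentIn hx), hσ⟩
  have hgeneral := spectrum_shrinker_of_adjoint_orbit_triangular_general (κ := Fin m) hGunit hGone
    hGconn.isPreconnected V.zero_mem (V.restrictScalars ℝ).convex.isPreconnected hV hLne
    (hL'.trans_subset Set.sdiff_subset) hinj hdense horbit
  rw [Fintype.card_fin, Fintype.card_fin] at hgeneral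
  exact ⟨hgeneral.1, fun _ => hgeneral.2⟩
end

section
/- Let n ≥ 1. A matrix X ∈ M_n has an open neighborhood U ⊆ M_n admitting a continuous eigenvalue selection (i.e., a continuous map φ : U → ℂ with φ(Y) ∈ sp(Y) for all Y ∈ U) if and only if X has at least one simple eigenvalue, i.e., an eigenvalue whose algebraic multiplicity (multiplicity as a root of the characteristic polynomial k_X) equals 1. -/
open Matrix

/-!
A simple root of the characteristic polynomial is continued to nearby matrices by the implicit
function theorem. Conversely, let `φ` be a continuous eigenvalue selection near `X`. In a basis that
makes `X` lower triangular, adding `t` times the nilpotent shift does not change the characteristic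
polynomial `p`, and gives a matrix with a cyclic vector for all small `t ≠ 0`; so matrices `A` with
a cyclic vector and characteristic polynomial `p` accumulate at `X`. Such an `A` has a rank one
perturbation direction `N` with `(A + z • N).charpoly = p - C z`, so that `z ↦ φ (A + z • N)` is a
continuous local right inverse of `p`. Away from the critical values of `p` such an inverse is
holomorphic, hence it is holomorphic everywhere by the removable singularity theorem, and the chain
rule gives `p' (φ A) ≠ 0`: the eigenvalue `φ A` of `X` is simple.
-/

open Filter Polynomial Topology

section Krylov

lemma degree_sub_lt_of_monic_of_natDegree_eq {R : Type*} [Ring R] {n : ℕ} {p q : R[X]}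
    (hp : p.Monic) (hq : q.Monic) (hpn : p.natDegree = n) (hqn : q.natDegree = n) :
    (p - q).degree < n := by
  nontriviality R
  have hpdeg : p.degree = n := (degree_eq_iff_natDegree_eq hp.ne_zero).2 hpn
  have hqdeg : q.degree = n := (degree_eq_iff_natDegree_eq hq.ne_zero).2 hqn
  exact hpdeg ▸ degree_sub_lt_left (hpdeg.trans hqdeg.symm) hp.ne_zero
    (hp.leadingCoeff.trans hq.leadingCoeff.symm)

/-- The Krylov matrix of `A` and `v`, with columns `v, A v, …, A ^ (n - 1) v`. It is invertible
exactly when `v` is a cyclic vector of `A`. -/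
def krylov {R : Type*} [Semiring R] {n : ℕ} (A : Matrix (Fin n) (Fin n) R) (v : Fin n → R) :
    Matrix (Fin n) (Fin n) R :=
  of fun i j => (A ^ (j : ℕ) *ᵥ v) i

lemma krylov_congr {R : Type*} [Semiring R] {n : ℕ} {A B : Matrix (Fin n) (Fin n) R}
    {v : Fin n → R} (h : ∀ j < n, A ^ j *ᵥ v = B ^ j *ᵥ v) : krylov A v = krylov B v :=
  Matrix.ext fun i j => congrFun (h j j.isLt) i

lemma krylov_smul {R : Type*} [CommSemiring R] {n : ℕ} (c : R) (A : Matrix (Fin n) (Fin n) R)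
    (v : Fin n → R) : krylov (c • A) v = krylov A v * diagonal fun j : Fin n => c ^ (j : ℕ) := by
  ext i j
  simp [krylov, mul_diagonal, _root_.smul_pow, smul_mulVec, mul_comm]

lemma krylov_map {R S : Type*} [Semiring R] [Semiring S] {n : ℕ} (f : R →+* S)
    (A : Matrix (Fin n) (Fin n) R) (v : Fin n → R) :
    krylov (A.map f) (f ∘ v) = (krylov A v).map f := by
  ext i j
  simp only [krylov, of_apply, map_apply, RingHom.map_mulVec, Matrix.map_pow]

variable {R : Type*} [CommRing R] {n : ℕ}

lemma krylov_units_conj (P : (Matrix (Fin n) (Fin n) R)ˣ) (A : Matrix (Fin n) (Fin n) R)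
    (v : Fin n → R) : krylov (P.val * A * P.val⁻¹) (P.val *ᵥ v) = P.val * krylov A v := by
  ext i j
  rw [krylov, of_apply, ← coe_units_inv, Units.conj_pow, mulVec_mulVec, mul_assoc, P.inv_mul,
    mul_one, ← mulVec_mulVec]
  rfl

lemma aeval_mulVec_eq_krylov_mulVec (A : Matrix (Fin n) (Fin n) R) (v : Fin n → R) {p : R[X]}
    (hp : p.degree < n) : aeval A p *ᵥ v = krylov A v *ᵥ p.toFn n := by
  rcases eq_or_ne p 0 with rfl | hp0
  · simp
  rw [aeval_eq_sum_range' ((natDegree_lt_iff_degree_lt hp0).2 hp), Finset.sum_range, sum_mulVec]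
  ext i
  simp only [Finset.sum_apply, smul_mulVec, Pi.smul_apply, smul_eq_mul]
  exact Finset.sum_congr rfl fun _ _ => mul_comm _ _

lemma eq_zero_of_aeval_mulVec_eq_zero {A : Matrix (Fin n) (Fin n) R} {v : Fin n → R}
    (hK : IsUnit (krylov A v)) {p : R[X]} (hp : p.degree < n) (h : aeval A p *ᵥ v = 0) :
    p = 0 := by
  have hcoeff : p.toFn n = 0 := mulVec_injective_of_isUnit hK <| by
    rw [← aeval_mulVec_eq_krylov_mulVec A v hp, h, mulVec_zero]
  ext k
  rcases lt_or_ge k n with hk | hk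
  · exact congrFun hcoeff ⟨k, hk⟩
  · exact coeff_eq_zero_of_degree_lt (hp.trans_le (by exact_mod_cast hk))

lemma charpoly_eq_of_aeval_mulVec_eq_zero {A : Matrix (Fin n) (Fin n) R} {v : Fin n → R}
    (hK : IsUnit (krylov A v)) {p : R[X]} (hp : p.Monic) (hdeg : p.natDegree = n)
    (h : aeval A p *ᵥ v = 0) : A.charpoly = p := by
  nontriviality R
  have hA : A.charpoly.natDegree = n := by simp
  refine sub_eq_zero.1 <| eq_zero_of_aeval_mulVec_eq_zero hK
    (degree_sub_lt_of_monic_of_natDegree_eq A.charpoly_monic hp hA hdeg) ?_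
  rw [map_sub, aeval_self_charpoly, zero_sub, neg_mulVec, h, neg_zero]

lemma aeval_mulVec_sub_aeval_mulVec {A B : Matrix (Fin n) (Fin n) R} {v : Fin n → R}
    (h : ∀ j < n, A ^ j *ᵥ v = B ^ j *ᵥ v) {p : R[X]} (hp : p.Monic) (hdeg : p.natDegree = n) :
    aeval A p *ᵥ v - aeval B p *ᵥ v = A ^ n *ᵥ v - B ^ n *ᵥ v := by
  nontriviality R
  have hlt : (p - (X : R[X]) ^ n).degree < (n : WithBot ℕ) :=
    degree_sub_lt_of_monic_of_natDegree_eq hp (monic_X_pow n) hdeg (natDegree_X_pow n)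
  have hlow : aeval A (p - X ^ n) *ᵥ v = aeval B (p - X ^ n) *ᵥ v := by
    rw [aeval_mulVec_eq_krylov_mulVec A v hlt, aeval_mulVec_eq_krylov_mulVec B v hlt,
      krylov_congr h]
  simp only [map_sub, map_pow, aeval_X, sub_mulVec] at hlow
  linear_combination hlow

lemma add_vecMulVec_pow_mulVec {m : Type*} [Fintype m] [DecidableEq m] {A : Matrix m m R}
    {v w : m → R} (u : m → R) {k : ℕ} (hw : ∀ j < k, w ⬝ᵥ (A ^ j *ᵥ v) = 0) :
    (A + vecMulVec u w) ^ k *ᵥ v = A ^ k *ᵥ v := by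
  induction k with
  | zero => simp
  | succ k ih =>
    rw [pow_succ', ← mulVec_mulVec, ih fun j hj => hw j (hj.trans k.lt_succ_self), add_mulVec,
      vecMulVec_mulVec, hw k k.lt_succ_self, MulOpposite.op_zero, zero_smul, add_zero,
      mulVec_mulVec, ← pow_succ']

lemma charpoly_add_vecMulVec {A : Matrix (Fin (n + 1)) (Fin (n + 1)) R} {v w : Fin (n + 1) → R}
    (hK : IsUnit (krylov A v)) (hw : ∀ j < n, w ⬝ᵥ (A ^ j *ᵥ v) = 0) :
    (A + vecMulVec v w).charpoly = A.charpoly - C (w ⬝ᵥ (A ^ n *ᵥ v)) := by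
  nontriviality R
  set B := A + vecMulVec v w
  set c := w ⬝ᵥ (A ^ n *ᵥ v)
  have hpow (j : ℕ) (hj : j < n + 1) : B ^ j *ᵥ v = A ^ j *ᵥ v :=
    add_vecMulVec_pow_mulVec v fun i hi => hw i (by lia)
  have htop : B ^ (n + 1) *ᵥ v - A ^ (n + 1) *ᵥ v = c • v := by
    rw [pow_succ', ← mulVec_mulVec, hpow n n.lt_succ_self, add_mulVec, vecMulVec_mulVec,
      op_smul_eq_smul, mulVec_mulVec, ← pow_succ', add_sub_cancel_left]
  have hdeg : A.charpoly.natDegree = n + 1 := by simp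
  have hBv : aeval B A.charpoly *ᵥ v = c • v := by
    simpa only [aeval_self_charpoly, zero_mulVec, sub_zero, htop] using
      aeval_mulVec_sub_aeval_mulVec hpow A.charpoly_monic hdeg
  have hmonic : (A.charpoly - C c).Monic := A.charpoly_monic.sub_of_left <|
    degree_C_le.trans_lt <| natDegree_pos_iff_degree_pos.1 (by lia)
  refine charpoly_eq_of_aeval_mulVec_eq_zero (krylov_congr hpow ▸ hK) hmonic
    (by rw [natDegree_sub_C, hdeg]) ?_
  rw [map_sub, aeval_C, sub_mulVec, hBv, Algebra.algebraMap_eq_smul_one, smul_mulVec, one_mulVec,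
    sub_self]

lemma exists_charpoly_add_smul_eq_sub_C {A : Matrix (Fin (n + 1)) (Fin (n + 1)) R}
    {v : Fin (n + 1) → R} (hK : IsUnit (krylov A v)) :
    ∃ B : Matrix (Fin (n + 1)) (Fin (n + 1)) R,
      ∀ z : R, (A + z • B).charpoly = A.charpoly - C z := by
  obtain ⟨w, hw⟩ := vecMul_surjective_iff_isUnit.2 hK (Pi.single (Fin.last n) 1)
  have hdot (j : Fin (n + 1)) :
      w ⬝ᵥ (A ^ (j : ℕ) *ᵥ v) = (Pi.single (Fin.last n) 1 : Fin (n + 1) → R) j :=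
    congrFun hw j
  refine ⟨vecMulVec v w, fun z => ?_⟩
  rw [← vecMulVec_smul, charpoly_add_vecMulVec hK, smul_dotProduct]
  · rw [show w ⬝ᵥ (A ^ n *ᵥ v) = 1 by simpa using hdot (Fin.last n), smul_eq_mul, mul_one]
  · intro j hj
    have hne : (⟨j, by lia⟩ : Fin (n + 1)) ≠ Fin.last n := (Fin.lt_last_iff_ne_last).1 hj
    rw [smul_dotProduct, hdot ⟨j, by lia⟩, Pi.single_eq_of_ne hne, smul_zero]

end Krylov

section Shift

variable (R : Type*) [Semiring R] (n : ℕ)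

/-- The nilpotent Jordan block with ones on the subdiagonal, for which the first standard basis
vector is cyclic. -/
def lowerShift : Matrix (Fin n) (Fin n) R :=
  of fun i j => if (i : ℕ) = j + 1 then 1 else 0

lemma lowerShift_pow_mulVec_single (k : Fin (n + 1)) :
    lowerShift R (n + 1) ^ (k : ℕ) *ᵥ Pi.single 0 1 = Pi.single k 1 := by
  induction k using Fin.induction with
  | zero => rw [Fin.val_zero, pow_zero, one_mulVec]
  | succ k ih =>
    rw [Fin.val_succ, pow_succ', ← mulVec_mulVec, ← Fin.val_castSucc, ih, mulVec_single_one]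
    ext i
    simp [lowerShift, Pi.single_apply, Fin.ext_iff]

lemma krylov_lowerShift : krylov (lowerShift R (n + 1)) (Pi.single 0 1) = 1 := by
  ext i j
  rw [krylov, of_apply, lowerShift_pow_mulVec_single, one_apply, Pi.single_apply]

end Shift

section Triangular

lemma charpoly_of_isLowerTriangular {R m : Type*} [CommRing R] [Fintype m] [DecidableEq m]
    [LinearOrder m] {T : Matrix m m R} (hT : T.IsLowerTriangular) :
    T.charpoly = ∏ i, (X - C (T i i)) := by
  rw [← charpoly_transpose]
  exact charpoly_of_isUpperTriangular _ hT.transpose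

lemma charpoly_add_of_isLowerTriangular {R m : Type*} [CommRing R] [Fintype m] [DecidableEq m]
    [LinearOrder m] {T N : Matrix m m R} (hT : T.IsLowerTriangular) (hN : N.IsLowerTriangular)
    (hdiag : N.diag = 0) : (T + N).charpoly = T.charpoly := by
  rw [charpoly_of_isLowerTriangular (hT.add hN), charpoly_of_isLowerTriangular hT]
  refine Finset.prod_congr rfl fun i _ => ?_
  have hii : N i i = 0 := congrFun hdiag i
  rw [Matrix.add_apply, hii, add_zero]

variable {K : Type*} [Field K] [IsAlgClosed K]

lemma exists_basis_forall_apply_mem_span_Ici {V : Type*} [AddCommGroup V] [Module K V]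
    [FiniteDimensional K V] (f : Module.End K V) {n : ℕ} (hn : Module.finrank K V = n) :
    ∃ b : Module.Basis (Fin n) K V, ∀ j, f (b j) ∈ Submodule.span K (b '' Set.Ici j) := by
  induction n generalizing V with
  | zero => exact ⟨Module.finBasisOfFinrankEq K V hn, fun j => j.elim0⟩
  | succ n ih =>
    have : Nontrivial V := Module.nontrivial_of_finrank_pos (R := K) (by lia)
    obtain ⟨μ, hμ⟩ := Module.End.exists_eigenvalue (K := K) (V := Module.Dual K V) f.dualMap
    obtain ⟨ℓ, hℓ, hℓ0⟩ := hμ.exists_hasEigenvector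
    rw [Module.End.mem_eigenspace_iff] at hℓ
    have hℓf (x : V) : ℓ (f x) = μ * ℓ x := congrArg (· x) hℓ
    obtain ⟨y, hy⟩ : ∃ y, ℓ y ≠ 0 := DFunLike.ne_iff.1 hℓ0
    let W := LinearMap.ker ℓ
    have hW : Module.finrank K W = n := by
      have := Module.Dual.finrank_ker_add_one_of_ne_zero hℓ0
      exact Nat.succ_injective (this.trans hn)
    have hfW (x) (hx : x ∈ W) : f x ∈ W := by
      rw [LinearMap.mem_ker] at hx ⊢
      rw [hℓf, hx, mul_zero]
    obtain ⟨b, hb⟩ := ih (f.restrict hfW) hW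
    let b' : Module.Basis (Fin (n + 1)) K V := Module.Basis.mkFinCons y b
      (fun c x (hx : ℓ x = 0) h => by
        have hc : c * ℓ y = 0 := by simpa [hx] using congrArg ℓ h
        exact (mul_eq_zero.1 hc).resolve_right hy)
      (fun z => ⟨-(ℓ z / ℓ y), by simp [W, hy]⟩)
    have hsucc (i : Fin n) : b' i.succ = b i :=
      congrFun (Module.Basis.coe_mkFinCons y b _ _) i.succ
    refine ⟨b', Fin.cases ?_ fun j => ?_⟩
    · rw [← bot_eq_zero, Set.Ici_bot, Set.image_univ, b'.span_eq]
      exact Submodule.mem_top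
    · have hmem : f (b j) ∈ Submodule.map W.subtype (Submodule.span K (b '' Set.Ici j)) :=
        ⟨_, hb j, rfl⟩
      rw [Submodule.map_span, Set.image_image] at hmem
      rw [hsucc]
      refine Submodule.span_mono ?_ hmem
      rintro _ ⟨i, hi, rfl⟩
      exact ⟨i.succ, by simpa using hi, hsucc i⟩

lemma exists_units_conj_isLowerTriangular {n : ℕ} (A : Matrix (Fin n) (Fin n) K) :
    ∃ (P : (Matrix (Fin n) (Fin n) K)ˣ) (T : Matrix (Fin n) (Fin n) K),
      T.IsLowerTriangular ∧ A = P.val * T * P.val⁻¹ := by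
  obtain ⟨b, hb⟩ := exists_basis_forall_apply_mem_span_Ici (toLin' A) (Module.finrank_fin_fun K)
  let e := Pi.basisFun K (Fin n)
  refine ⟨⟨e.toMatrix b, b.toMatrix e, e.toMatrix_mul_toMatrix_flip b,
    b.toMatrix_mul_toMatrix_flip e⟩, LinearMap.toMatrix b b (toLin' A), fun i j hij => ?_, ?_⟩
  · rw [LinearMap.toMatrix_apply]
    by_contra hne
    exact (b.mem_span_image.1 (hb j) (Finsupp.mem_support_iff.2 hne)).not_gt hij
  · rw [← coe_units_inv]
    exact ((basis_toMatrix_mul_linearMap_toMatrix_mul_basis_toMatrix e b e b (toLin' A)).trans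
      (LinearMap.toMatrix'_toLin' A)).symm

lemma exists_isUnit_krylov_forall_charpoly_add_smul_eq {n : ℕ}
    (A : Matrix (Fin (n + 1)) (Fin (n + 1)) K) :
    ∃ (S : Matrix (Fin (n + 1)) (Fin (n + 1)) K) (v : Fin (n + 1) → K),
      IsUnit (krylov S v) ∧ ∀ t : K, (A + t • S).charpoly = A.charpoly := by
  obtain ⟨P, T, hT, rfl⟩ := exists_units_conj_isLowerTriangular A
  refine ⟨P.val * lowerShift K (n + 1) * P.val⁻¹, P.val *ᵥ Pi.single 0 1, ?_, fun t => ?_⟩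
  · rw [krylov_units_conj, krylov_lowerShift, mul_one]
    exact P.isUnit
  · have hconj : P.val * T * P.val⁻¹ + t • (P.val * lowerShift K (n + 1) * P.val⁻¹) =
        P.val * (T + t • lowerShift K (n + 1)) * P.val⁻¹ := by simp [mul_add, add_mul]
    rw [hconj, charpoly_units_conj, charpoly_units_conj, charpoly_add_of_isLowerTriangular hT]
    · intro i j hij
      have hne : (i : ℕ) ≠ j + 1 := by have : i < j := hij; lia
      simp [lowerShift, hne]
    · ext i
      simp [lowerShift]

end Triangular

section Density

lemma eventually_cofinite_isUnit_krylov_smul_add {K : Type*} [Field K] {n : ℕ}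
    (A : Matrix (Fin n) (Fin n) K) {S : Matrix (Fin n) (Fin n) K} {v : Fin n → K}
    (hK : IsUnit (krylov S v)) : ∀ᶠ s : K in cofinite, IsUnit (krylov (s • A + S) v) := by
  let D : K[X] := (krylov ((X : K[X]) • A.map C + S.map C) (C ∘ v)).det
  have heval (s : K) : D.eval s = (krylov (s • A + S) v).det := by
    rw [← coe_evalRingHom, RingHom.map_det, RingHom.mapMatrix_apply, ← krylov_map]
    congr
    · ext; simp [mul_comm s]
    · ext; simp
  have hD : D ≠ 0 := fun h => by
    have h0 : (krylov S v).det = 0 := by simpa [h] using (heval 0).symm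
    exact ((isUnit_iff_isUnit_det _).1 hK).ne_zero h0
  refine (finite_setOfPred_isRoot hD).subset fun s hs => ?_
  by_contra h
  exact hs <| (isUnit_iff_isUnit_det _).2 <| isUnit_iff_ne_zero.2 <| heval s ▸ h

lemma frequently_charpoly_eq_and_exists_isUnit_krylov {𝕜 : Type*} [NontriviallyNormedField 𝕜]
    [IsAlgClosed 𝕜] {n : ℕ} (A : Matrix (Fin (n + 1)) (Fin (n + 1)) 𝕜) :
    ∃ᶠ B in 𝓝 A, B.charpoly = A.charpoly ∧ ∃ v, IsUnit (krylov B v) := by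
  obtain ⟨S, v, hS, hchar⟩ := exists_isUnit_krylov_forall_charpoly_add_smul_eq A
  have hlim : Tendsto (fun s : 𝕜 => A + s⁻¹ • S) (Bornology.cobounded 𝕜) (𝓝 A) := by
    simpa using ((tendsto_inv₀_cobounded (α := 𝕜)).smul_const S).const_add A
  refine hlim.frequently (Eventually.frequently ?_)
  filter_upwards [(eventually_cofinite_isUnit_krylov_smul_add A hS).filter_mono
    (Bornology.le_cofinite 𝕜), Bornology.eventually_ne_cobounded 0] with s hs hs0
  have hscale : A + s⁻¹ • S = s⁻¹ • (s • A + S) := by rw [smul_add, inv_smul_smul₀ hs0]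
  refine ⟨hchar s⁻¹, v, ?_⟩
  rw [hscale, krylov_smul]
  refine hs.mul <| isUnit_diagonal.2 <| Pi.isUnit_iff.2 fun j => ?_
  exact (isUnit_iff_ne_zero.2 (inv_ne_zero hs0)).pow _

end Density

section Analysis

lemma exists_isOpen_continuous_iff_exists_eventually_continuousAt {X Y : Type*}
    [TopologicalSpace X] [TopologicalSpace Y] {x : X} {P : X → Y → Prop} :
    (∃ U : Set X, IsOpen U ∧ x ∈ U ∧
      ∃ φ : {y : X // y ∈ U} → Y, Continuous φ ∧ ∀ y, P y.val (φ y)) ↔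
    ∃ φ : X → Y, ∀ᶠ y in 𝓝 x, ContinuousAt φ y ∧ P y (φ y) := by
  constructor
  · rintro ⟨U, hU, hx, φ, hφ, hP⟩
    let ψ : X → Y := Function.extend Subtype.val φ fun _ => φ ⟨x, hx⟩
    have hψ (y : {y : X // y ∈ U}) : ψ y = φ y := Subtype.val_injective.extend_apply φ _ y
    have hψU : ContinuousOn ψ U := continuousOn_iff_continuous_domRestrict.2 <| by
      rwa [show U.domRestrict ψ = φ from funext hψ]
    refine ⟨ψ, ?_⟩
    filter_upwards [hU.mem_nhds hx] with y hy
    exact ⟨hψU.continuousAt (hU.mem_nhds hy), hψ ⟨y, hy⟩ ▸ hP ⟨y, hy⟩⟩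
  · rintro ⟨φ, hφ⟩
    obtain ⟨U, hUφ, hU, hx⟩ := mem_nhds_iff.1 hφ
    exact ⟨U, hU, hx, fun y => φ y,
      continuous_iff_continuousAt.2 fun y => (hUφ y.2).1.comp continuousAt_subtype_val,
      fun y => (hUφ y.2).2⟩

lemma exists_eventually_continuousAt_and_apply_eq {𝕜 E F G : Type*} [NontriviallyNormedField 𝕜]
    [NormedAddCommGroup E] [NormedSpace 𝕜 E] [CompleteSpace E]
    [NormedAddCommGroup F] [NormedSpace 𝕜 F] [CompleteSpace F]
    [NormedAddCommGroup G] [NormedSpace 𝕜 G] [CompleteSpace G]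
    {f : E × F → G} {f' : E × F →L[𝕜] G} {x : E} {y : F} (hf : HasStrictFDerivAt f f' (x, y))
    (hf' : (f' ∘L .inr 𝕜 E F).IsInvertible) :
    ∃ φ : E → F, ∀ᶠ z in 𝓝 x, ContinuousAt φ z ∧ f (z, φ z) = f (x, y) := by
  obtain ⟨_, s, hs, hlip⟩ :=
    (hf.hasStrictFDerivAt_implicitFunctionOfProdDomain hf').exists_lipschitzOnWith
  refine ⟨hf.implicitFunctionOfProdDomain hf', ?_⟩
  filter_upwards [eventually_mem_nhds_iff.2 hs,
    hf.eventually_apply_implicitFunctionOfProdDomain hf'] with z hz hfz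
  exact ⟨hlip.continuousOn.continuousAt hz, hfz⟩

lemma not_eventually_deriv_eq_zero_of_right_inverse {f ψ : ℂ → ℂ} {a : ℂ}
    (hf : AnalyticAt ℂ f (ψ a)) (hψ : ContinuousAt ψ a) (hfψ : ∀ᶠ z in 𝓝 a, f (ψ z) = z) :
    ¬ ∀ᶠ w in 𝓝 (ψ a), deriv f w = 0 := by
  intro h
  obtain ⟨r, hr, hball⟩ := Metric.eventually_nhds_iff_ball.1 (h.and hf.eventually_analyticAt)
  have hconst : ∀ᶠ w in 𝓝 (ψ a), f w = f (ψ a) := by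
    filter_upwards [Metric.ball_mem_nhds (ψ a) hr] with w hw
    exact Metric.isOpen_ball.is_const_of_deriv_eq_zero (convex_ball _ _).isPreconnected
      (fun u hu => (hball u hu).2.differentiableAt.differentiableWithinAt)
      (fun u hu => (hball u hu).1) hw (Metric.mem_ball_self hr)
  have hid : ∀ᶠ z in 𝓝 a, z = a := by
    filter_upwards [hψ.eventually hconst, hfψ] with z hz hfz
    rw [← hfz, hz, hfψ.self_of_nhds]
  obtain ⟨z, hza, hz⟩ := ((hid.filter_mono nhdsWithin_le_nhds).and
    (self_mem_nhdsWithin : {a}ᶜ ∈ 𝓝[≠] a)).exists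
  exact hz hza

lemma deriv_ne_zero_of_right_inverse {f ψ : ℂ → ℂ} {a : ℂ} (hf : AnalyticAt ℂ f (ψ a))
    (hψ : ∀ᶠ z in 𝓝 a, ContinuousAt ψ z) (hfψ : ∀ᶠ z in 𝓝 a, f (ψ z) = z) :
    deriv f (ψ a) ≠ 0 := by
  have hψa : ContinuousAt ψ a := hψ.self_of_nhds
  have hne : ∀ᶠ w in 𝓝[≠] (ψ a), deriv f w ≠ 0 :=
    hf.deriv.eventually_eq_zero_or_eventually_ne_zero.resolve_left
      (not_eventually_deriv_eq_zero_of_right_inverse hf hψa hfψ)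
  have hpunctured : Tendsto ψ (𝓝[≠] a) (𝓝[≠] (ψ a)) := by
    refine tendsto_nhdsWithin_of_tendsto_nhds_of_eventually_within _
      (hψa.tendsto.mono_left nhdsWithin_le_nhds) ?_
    filter_upwards [hfψ.filter_mono nhdsWithin_le_nhds, self_mem_nhdsWithin] with z hz hza hψz
    exact hza <| hz.symm.trans <| (congrArg f hψz).trans hfψ.self_of_nhds
  have hdiff : ∀ᶠ z in 𝓝[≠] a, DifferentiableAt ℂ ψ z := by
    filter_upwards [hpunctured.eventually hne, hψ.filter_mono nhdsWithin_le_nhds,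
      (hψa.eventually hf.eventually_analyticAt).filter_mono nhdsWithin_le_nhds,
      hfψ.eventually_nhds.filter_mono nhdsWithin_le_nhds] with z hz hψz hfz hinv
    exact (hfz.differentiableAt.hasDerivAt.of_local_left_inverse hψz hz hinv).differentiableAt
  have hψ' : HasDerivAt ψ (deriv ψ a) a :=
    (Complex.analyticAt_of_differentiable_on_punctured_nhds_of_continuousAt hdiff
      hψa).differentiableAt.hasDerivAt
  have hchain : deriv f (ψ a) * deriv ψ a = 1 :=
    (hf.differentiableAt.hasDerivAt.comp a hψ').unique ((hasDerivAt_id a).congr_of_eventuallyEq hfψ)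
  exact left_ne_zero_of_mul_eq_one hchain

end Analysis

section Selection

open scoped Matrix.Norms.Elementwise in
lemma analyticAt_eval_charpoly {𝕜 m : Type*} [NontriviallyNormedField 𝕜] [Fintype m]
    [DecidableEq m] (q : Matrix m m 𝕜 × 𝕜) :
    AnalyticAt 𝕜 (fun q : Matrix m m 𝕜 × 𝕜 => q.1.charpoly.eval q.2) q := by
  have hentry (i j : m) : AnalyticAt 𝕜 (fun q : Matrix m m 𝕜 × 𝕜 => q.1 i j) q :=
    ((ContinuousLinearMap.proj (R := 𝕜) (φ := fun _ : m => 𝕜) j).comp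
      ((ContinuousLinearMap.proj (R := 𝕜) (φ := fun _ : m => m → 𝕜) i).comp
        (ContinuousLinearMap.fst 𝕜 (Matrix m m 𝕜) 𝕜))).analyticAt q
  simp only [eval_charpoly, det_apply', Matrix.sub_apply, scalar_apply]
  refine Finset.analyticAt_fun_sum _ fun σ _ => analyticAt_const.mul <|
    Finset.analyticAt_fun_prod _ fun i _ => AnalyticAt.sub ?_ (hentry _ _)
  obtain h | h := eq_or_ne (σ i) i
  · simpa only [h, diagonal_apply_eq] using analyticAt_snd
  · simpa only [diagonal_apply_ne _ h] using analyticAt_const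

open scoped Matrix.Norms.Elementwise in
lemma exists_eventually_continuousAt_isRoot_charpoly {𝕜 m : Type*} [NontriviallyNormedField 𝕜]
    [CompleteSpace 𝕜] [Fintype m] [DecidableEq m] {A : Matrix m m 𝕜} {μ : 𝕜}
    (hμ : A.charpoly.IsRoot μ) (hμ' : ¬ A.charpoly.derivative.IsRoot μ) :
    ∃ φ : Matrix m m 𝕜 → 𝕜, ∀ᶠ B in 𝓝 A, ContinuousAt φ B ∧ B.charpoly.IsRoot (φ B) := by
  -- Instance search finds completeness of matrices only for the product uniformity, which it does
  -- not identify with the one of the elementwise norm.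
  have : @CompleteSpace (Matrix m m 𝕜) PseudoMetricSpace.toUniformSpace :=
    FiniteDimensional.complete 𝕜 _
  have hF := (analyticAt_eval_charpoly (A, μ)).hasStrictFDerivAt
  have hderiv : HasFDerivAt (fun z => A.charpoly.eval z) (_ ∘L .inr 𝕜 (Matrix m m 𝕜) 𝕜) μ :=
    hF.hasFDerivAt.comp μ (hasFDerivAt_prodMk_right A μ)
  have hinv := hderiv.unique ((A.charpoly.hasDerivAt μ).hasFDerivAt_equiv hμ')
  obtain ⟨φ, hφ⟩ := exists_eventually_continuousAt_and_apply_eq hF ⟨_, hinv.symm⟩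
  exact ⟨φ, hφ.mono fun B hB => ⟨hB.1, hB.2.trans hμ⟩⟩

lemma not_isRoot_derivative_charpoly_of_isUnit_krylov {n : ℕ}
    {A : Matrix (Fin (n + 1)) (Fin (n + 1)) ℂ} {v : Fin (n + 1) → ℂ} (hK : IsUnit (krylov A v))
    {φ : Matrix (Fin (n + 1)) (Fin (n + 1)) ℂ → ℂ}
    (hφ : ∀ᶠ B in 𝓝 A, ContinuousAt φ B ∧ B.charpoly.IsRoot (φ B)) :
    ¬ A.charpoly.derivative.IsRoot (φ A) := by
  obtain ⟨N, hN⟩ := exists_charpoly_add_smul_eq_sub_C hK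
  have hline : Continuous fun z : ℂ => A + z • N := by fun_prop
  have hlim : Tendsto (fun z : ℂ => A + z • N) (𝓝 0) (𝓝 A) := by
    simpa using hline.tendsto 0
  have hcont : ∀ᶠ z : ℂ in 𝓝 0, ContinuousAt (fun z => φ (A + z • N)) z :=
    (hlim.eventually hφ).mono fun z hz =>
      ContinuousAt.comp (f := fun z : ℂ => A + z • N) hz.1 hline.continuousAt
  have hinv : ∀ᶠ z : ℂ in 𝓝 0, A.charpoly.eval (φ (A + z • N)) = z :=
    (hlim.eventually hφ).mono fun z hz => by
      simpa [hN, sub_eq_zero] using hz.2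
  have hderiv := deriv_ne_zero_of_right_inverse
    (analyticAt_id.aeval_polynomial A.charpoly) hcont hinv
  simpa using hderiv

lemma rootMultiplicity_eq_one_iff {R : Type*} [CommRing R] {p : R[X]} (hp : p ≠ 0)
    {t : R} : p.rootMultiplicity t = 1 ↔ p.IsRoot t ∧ ¬ p.derivative.IsRoot t := by
  have hpos := rootMultiplicity_pos hp (x := t)
  have hone := one_lt_rootMultiplicity_iff_isRoot hp (t := t)
  grind

end Selection

/-- A matrix `X ∈ M_n` has an open neighborhood admitting a continuous
eigenvalue selection iff `X` has at least one simple eigenvalue (an eigenvalue whose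
multiplicity as a root of the characteristic polynomial equals `1`). -/
theorem nbhd_continuous_eigenvalue_selection_iff_simple_eigenvalue
    (n : ℕ) (hn : 1 ≤ n) (X : Matrix (Fin n) (Fin n) ℂ) :
    (∃ U : Set (Matrix (Fin n) (Fin n) ℂ), IsOpen U ∧ X ∈ U ∧
        ∃ φ : {Y : Matrix (Fin n) (Fin n) ℂ // Y ∈ U} → ℂ,
          Continuous φ ∧ ∀ Y, φ Y ∈ spectrum ℂ Y.val) ↔
    (∃ μ ∈ spectrum ℂ X, Polynomial.rootMultiplicity μ X.charpoly = 1) := by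
  simp only [mem_spectrum_iff_isRoot_charpoly,
    rootMultiplicity_eq_one_iff X.charpoly_monic.ne_zero, and_self_left]
  refine (exists_isOpen_continuous_iff_exists_eventually_continuousAt
    (P := fun (Y : Matrix (Fin n) (Fin n) ℂ) μ => Y.charpoly.IsRoot μ)).trans ⟨?_, ?_⟩
  · rintro ⟨φ, hφ⟩
    obtain ⟨n, rfl⟩ := Nat.exists_eq_add_of_le' hn
    obtain ⟨A, ⟨hchar, v, hK⟩, hA⟩ :=
      ((frequently_charpoly_eq_and_exists_isUnit_krylov X).and_eventually hφ.eventually_nhds).exists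
    have hroot : X.charpoly.IsRoot (φ A) := hchar ▸ hA.self_of_nhds.2
    exact ⟨φ A, hroot, hchar ▸ not_isRoot_derivative_charpoly_of_isUnit_krylov hK hA⟩
  · rintro ⟨μ, hμ, hμ'⟩
    exact exists_eventually_continuousAt_isRoot_charpoly hμ hμ'
end
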